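/- Let n < p be positive integers and set q = p − n + 1. Let f_1, …, f_q ∈ ℂ[x_1,…,x_{n−1},z] be polynomials such that each f_j is weighted homogeneous of degree d_j with respect to positive integer weights (w_1,…,w_{n−1},w_n). Let P = (r_1,…,r_ℓ) be a partition of k satisfying p − k(p−n+1) + ℓ = 0, and let J_Δ(f,P) ⊆ ℂ[x_1,…,x_{n−1},z_1,…,z_k] be the ideal generated by the polynomials V_i^k(f_j) for 1 ≤ i ≤ k−1, 1 ≤ j ≤ q, together with the differences z_a − z_{a+1} for every index a such that a and a+1 lie in the same block of P. If the quotient ring ℂ[x_1,…,x_{n−1},z_1,…,z_k]/J_Δ(f,P) is finite-dimensional as a ℂ-vector space, then w_1⋯w_{n−1}·w_n^ℓ · dim_ℂ (ℂ[x_1,…,x_{n−1},z_1,…,z_k]/J_Δ(f,P)) = ∏_{j=1}^{q} ∏_{i=1}^{k−1} (d_j − i·w_n). -/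

import Mathlib

open MvPolynomial

/-- The `k×k` matrix whose `(a,b)` entry is `z_a^b` for `b ≠ i` and is
`g(x₁,…,x_{n−1},z_a)` for `b = i`. -/
noncomputable def Mmat {n k : ℕ} (g : MvPolynomial (Fin (n - 1) ⊕ Unit) ℂ) (i : Fin k) :
    Matrix (Fin k) (Fin k) (MvPolynomial (Fin (n - 1) ⊕ Fin k) ℂ) :=
  fun a b =>
    if b = i then rename (Sum.map id fun _ => a) g
    else (X (Sum.inr a) : MvPolynomial (Fin (n - 1) ⊕ Fin k) ℂ) ^ (b : ℕ)

/-- The Vandermonde determinant `∏_{a<b} (z_b − z_a)`. -/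
noncomputable def Vdm (n k : ℕ) : MvPolynomial (Fin (n - 1) ⊕ Fin k) ℂ :=
  ∏ p ∈ Finset.univ.filter (fun p : Fin k × Fin k => p.1 < p.2),
    (X (Sum.inr p.2) - X (Sum.inr p.1))

/-!
As a quotient of two determinants with homogeneous columns, `V_i^k(f_j)` is weighted homogeneous of
degree `d_j - i w_n`, and the condition on `k` and `ℓ` says that `J_Δ(f, P)` has exactly as many
generators as there are variables. The formula is therefore Bézout's theorem for the weights `w_s`:
if `N` weighted homogeneous polynomials of degrees `e_i` in `N` variables cut out a
finite-dimensional quotient, then `(∏ w_s) * dim = ∏ e_i`.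

If all `e_i` are positive, such polynomials form a regular sequence. Polynomials that do not vanish
at the origin are nonzerodivisors modulo homogeneous ideals, because their component of degree `0`
is a unit, so this may be checked in the local ring at the origin. There the depth of a module is at
most `dim A / p` for each of its associated primes `p`, so an equation `F` that is a zero divisor
would lie in an associated prime whose quotient has dimension larger than the number of remaining
equations. Each step along a regular sequence multiplies the Hilbert series by `1 - X ^ e_i`;
comparing with the sequence of the variables and letting `X → 1` gives the formula. If some `e_i` is
not positive, either the ideal is the unit ideal and some `e_i` vanishes, or the corresponding
generator is zero, which the finiteness of the quotient excludes.
-/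

section LocalAlgebra

open RingTheory.Sequence IsLocalRing Pointwise CategoryTheory Abelian

universe u v

variable {A : Type u} [CommRing A]

theorem ringKrullDim_quotient_add_one_le_of_mem_of_notMem {p q : Ideal A} [p.IsPrime]
    (hpq : p ≤ q) {a : A} (hap : a ∉ p) (haq : a ∈ q) :
    ringKrullDim (A ⧸ q) + 1 ≤ ringKrullDim (A ⧸ p) := by
  have ha : Ideal.Quotient.mk p a ∈ nonZeroDivisors (A ⧸ p) :=
    mem_nonZeroDivisors_of_ne_zero fun h => hap (Ideal.Quotient.eq_zero_iff_mem.mp h)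
  have hle : Ideal.span {Ideal.Quotient.mk p a} ≤ RingHom.ker (Ideal.Quotient.factor hpq) := by
    simpa [Ideal.span_le, RingHom.mem_ker, Ideal.Quotient.eq_zero_iff_mem] using haq
  have hsurj : Function.Surjective (Ideal.Quotient.lift _ (Ideal.Quotient.factor hpq) hle) :=
    Ideal.Quotient.lift_surjective_of_surjective _ _ (Ideal.Quotient.factor_surjective hpq)
  calc ringKrullDim (A ⧸ q) + 1
      ≤ ringKrullDim ((A ⧸ p) ⧸ Ideal.span {Ideal.Quotient.mk p a}) + 1 := by
        gcongr
        exact ringKrullDim_le_of_surjective _ hsurj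
    _ ≤ ringKrullDim (A ⧸ p) := ringKrullDim_quotient_succ_le_of_nonZeroDivisor ha

theorem notMem_of_isAssociatedPrime_of_isSMulRegular [IsNoetherianRing A] {M : Type*}
    [AddCommGroup M] [Module A M] {a : A} (ha : IsSMulRegular M a) {p : Ideal A}
    (hp : IsAssociatedPrime p M) : a ∉ p := fun hap =>
  (biUnion_associatedPrimes_eq_compl_regular A M).subset (Set.mem_biUnion hp hap) ha

theorem annihilator_sup_span_singleton_le {M : Type*} [AddCommGroup M] [Module A M] (F : A) :
    Module.annihilator A M ⊔ Ideal.span {F} ≤ Module.annihilator A (QuotSMulTop F M) :=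
  sup_le (LinearMap.annihilator_le_of_surjective _ (Submodule.mkQ_surjective _))
    ((Ideal.span_singleton_le_iff_mem _).mpr (QuotSMulTop.mem_annihilator M F))

theorem radical_eq_maximalIdeal_of_le [IsLocalRing A] {I J : Ideal A} (hIJ : I ≤ J) (hJ : J ≠ ⊤)
    (hI : I.radical = maximalIdeal A) : J.radical = maximalIdeal A :=
  le_antisymm (le_maximalIdeal (Ideal.radical_eq_top.not.mpr hJ))
    (hI ▸ Ideal.radical_mono hIJ)

variable [IsLocalRing A] [IsNoetherianRing A]

theorem ringKrullDim_le_length_of_radical_ofList_eq_maximalIdeal {Fs : List A}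
    (hFs : (Ideal.ofList Fs).radical = maximalIdeal A) :
    ringKrullDim A ≤ (Fs.length : WithBot ℕ∞) := by
  classical
  have hmin : maximalIdeal A ∈ (Ideal.span (Fs.toFinset : Set A)).minimalPrimes := by
    rw [List.coe_toFinset, ← Ideal.ofList, ← Ideal.radical_minimalPrimes, hFs,
      Ideal.minimalPrimes_eq_subsingleton_self]
    rfl
  rw [← maximalIdeal_height_eq_ringKrullDim]
  exact_mod_cast (Ideal.height_le_card_of_mem_minimalPrimes_span_finset hmin).trans
    (by exact_mod_cast Fs.toFinset_card_le)

theorem ringKrullDim_quotient_le_length {p : Ideal A} {Fs : List A}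
    (hFs : (p ⊔ Ideal.ofList Fs).radical = maximalIdeal A) :
    ringKrullDim (A ⧸ p) ≤ (Fs.length : WithBot ℕ∞) := by
  have hsurj := Ideal.Quotient.mk_surjective (I := p)
  have hp : p ≤ maximalIdeal A := hFs ▸ le_sup_left.trans Ideal.le_radical
  have : Nontrivial (A ⧸ p) :=
    Ideal.Quotient.nontrivial_iff.mpr (ne_top_of_le_ne_top Ideal.IsPrime.ne_top' hp)
  have : IsLocalRing (A ⧸ p) := .of_surjective' _ hsurj
  have hrad := Ideal.map_radical_of_surjective hsurj
    (I := p ⊔ Ideal.ofList Fs) (by rw [Ideal.mk_ker]; exact le_sup_left)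
  rw [hFs, Ideal.map_sup, Ideal.map_quotient_self, bot_sup_eq, Ideal.map_ofList] at hrad
  simpa using ringKrullDim_le_length_of_radical_ofList_eq_maximalIdeal
    (hrad.symm.trans (IsLocalRing.map_maximalIdeal_of_surjective _ hsurj))

section

variable {M : Type v} [AddCommGroup M] [Module A M] [Module.Finite A M]

/- Nakayama is applied to the torsion submodule `{y | p • y = 0}`; since `a` is regular on `M`,
dividing an element of it by `a` does not leave it. -/
theorem exists_torsionBySet_notMem_smul_top {a : A} (ha : a ∈ maximalIdeal A)
    (hreg : IsSMulRegular M a) {p : Ideal A} (hp : IsAssociatedPrime p M) :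
    ∃ y ∈ Submodule.torsionBySet A M p, y ∉ a • (⊤ : Submodule A M) := by
  set T := Submodule.torsionBySet A M p
  obtain ⟨hprime, x, rfl⟩ := isAssociatedPrime_iff.mp hp
  have hxT : x ∈ T := (Submodule.mem_torsionBySet_iff _ _).mpr fun s => by
    simpa using Submodule.mem_colon_singleton.mp s.2
  have hx : x ≠ 0 := by
    rintro rfl
    exact hprime.ne_top (by simp [Ideal.eq_top_iff_one, Submodule.mem_colon_singleton])
  have : Nontrivial T := ⟨⟨x, hxT⟩, 0, fun h => hx (congrArg Subtype.val h)⟩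
  have hne : (⊤ : Submodule A T) ≠ a • ⊤ :=
    Submodule.top_ne_pointwise_smul_of_mem_jacobson_annihilator (maximalIdeal_le_jacobson _ ha)
  obtain ⟨y, hy⟩ : ∃ y : T, y ∉ a • (⊤ : Submodule A T) := by
    by_contra! h
    exact hne (eq_top_iff.mpr fun y _ => h y).symm
  refine ⟨y, y.2, fun hya => hy ?_⟩
  obtain ⟨b, -, hb⟩ := Submodule.mem_smul_pointwise_iff_exists _ _ _ |>.mp hya
  have hbT : b ∈ T := (Submodule.mem_torsionBySet_iff _ _).mpr fun s => hreg <| by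
    simpa only [smul_zero, smul_comm a, hb] using (Submodule.mem_torsionBySet_iff _ _).mp y.2 s
  exact Submodule.mem_smul_pointwise_iff_exists _ _ _ |>.mpr ⟨⟨b, hbT⟩, trivial, Subtype.ext hb⟩

theorem exists_isAssociatedPrime_quotSMulTop {a : A} (ha : a ∈ maximalIdeal A)
    (hreg : IsSMulRegular M a) {p : Ideal A} (hp : IsAssociatedPrime p M) :
    ∃ q : Ideal A, IsAssociatedPrime q (QuotSMulTop a M) ∧ p ≤ q ∧ a ∈ q := by
  obtain ⟨y, hyp, hya⟩ := exists_torsionBySet_notMem_smul_top ha hreg hp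
  obtain ⟨q, hq, hle⟩ := exists_le_isAssociatedPrime_of_isNoetherianRing A
    (Submodule.Quotient.mk y : QuotSMulTop a M) (by rwa [Ne, Submodule.Quotient.mk_eq_zero])
  refine ⟨q, hq, fun s hs => hle ?_, hle ?_⟩ <;>
    rw [Submodule.mem_colon_singleton, Submodule.mem_bot, ← Submodule.Quotient.mk_smul]
  · rw [(Submodule.mem_torsionBySet_iff _ _).mp hyp ⟨s, hs⟩, Submodule.Quotient.mk_zero]
  · exact (Submodule.Quotient.mk_eq_zero _).mpr (Submodule.smul_mem_pointwise_smul _ _ _ trivial)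

end

theorem length_le_ringKrullDim_quotient {rs : List A} (hrs : ∀ r ∈ rs, r ∈ maximalIdeal A)
    {M : Type v} [AddCommGroup M] [Module A M] [Module.Finite A M] (hreg : IsWeaklyRegular M rs)
    {p : Ideal A} (hp : IsAssociatedPrime p M) :
    (rs.length : WithBot ℕ∞) ≤ ringKrullDim (A ⧸ p) := by
  induction rs generalizing M p with
  | nil =>
    have := hp.isPrime
    exact ringKrullDim_nonneg_of_nontrivial
  | cons a rs ih =>
    obtain ⟨ha, hrs⟩ := List.forall_mem_cons.mp hrs
    obtain ⟨hareg, hreg⟩ := (isWeaklyRegular_cons_iff M a rs).mp hreg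
    obtain ⟨q, hq, hpq, haq⟩ := exists_isAssociatedPrime_quotSMulTop ha hareg hp
    have := hp.isPrime
    calc ((a :: rs).length : WithBot ℕ∞)
        = rs.length + 1 := by rw [List.length_cons, Nat.cast_succ]
      _ ≤ ringKrullDim (A ⧸ q) + 1 := by gcongr; exact ih hrs hreg hq
      _ ≤ ringKrullDim (A ⧸ p) := ringKrullDim_quotient_add_one_le_of_mem_of_notMem hpq
          (notMem_of_isAssociatedPrime_of_isSMulRegular hareg hp) haq

/-- The module `M` over the local ring `A` has depth at least `n`, i.e. it admits a regular
sequence of length `n` inside the maximal ideal. -/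
def DepthGE (A : Type u) [CommRing A] [IsLocalRing A] (M : Type v) [AddCommGroup M] [Module A M]
    (n : ℕ) : Prop :=
  ∃ rs : List A, rs.length = n ∧ (∀ r ∈ rs, r ∈ maximalIdeal A) ∧ IsRegular M rs

variable {M : Type v} [AddCommGroup M] [Module A M] [Module.Finite A M]

theorem DepthGE.le_ringKrullDim_quotient {n : ℕ} (h : DepthGE A M n) {p : Ideal A}
    (hp : IsAssociatedPrime p M) : (n : WithBot ℕ∞) ≤ ringKrullDim (A ⧸ p) := by
  obtain ⟨rs, rfl, hrs, hreg⟩ := h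
  exact length_le_ringKrullDim_quotient hrs hreg.toIsWeaklyRegular hp

theorem isSMulRegular_of_depthGE {F : A} {Fs : List A} (hdepth : DepthGE A M (Fs.length + 1))
    (hFs : (Module.annihilator A M ⊔ Ideal.ofList (F :: Fs)).radical = maximalIdeal A) :
    IsSMulRegular M F := by
  by_contra hF
  obtain ⟨p, hp, hFp⟩ := Set.mem_iUnion₂.mp
    ((biUnion_associatedPrimes_eq_compl_regular A M).superset hF)
  have hle : Module.annihilator A M ⊔ Ideal.ofList (F :: Fs) ≤ p ⊔ Ideal.ofList Fs := by
    rw [Ideal.ofList_cons, ← sup_assoc]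
    refine sup_le_sup_right (sup_le ?_ ((Ideal.span_singleton_le_iff_mem p).mpr hFp)) _
    simpa [Submodule.annihilator_top] using hp.annihilator_le
  have hmax : p ⊔ Ideal.ofList Fs ≤ maximalIdeal A := by
    refine sup_le (le_maximalIdeal hp.isPrime.ne_top) (hFs ▸ le_trans ?_ Ideal.le_radical)
    rw [Ideal.ofList_cons]
    exact le_sup_of_le_right le_sup_right
  have := (hdepth.le_ringKrullDim_quotient hp).trans <| ringKrullDim_quotient_le_length <|
    radical_eq_maximalIdeal_of_le hle (ne_top_of_le_ne_top Ideal.IsPrime.ne_top' hmax) hFs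
  norm_cast at this
  lia

variable [Small.{v} A]

theorem depthGE_iff_subsingleton_ext [Nontrivial M] (n : ℕ) :
    DepthGE A M n ↔ ∀ i < n, Subsingleton (Ext
      (ModuleCat.of A (Shrink.{v} (A ⧸ maximalIdeal A))) (ModuleCat.of A M) i) :=
  (ModuleCat.exists_isRegular_tfae (maximalIdeal A) n (ModuleCat.of A M)
    (lt_top_iff_ne_top.mpr (Submodule.top_ne_ideal_smul_of_le_jacobson_annihilator
      (maximalIdeal_le_jacobson _)).symm)).out 3 1

theorem DepthGE.quotSMulTop {n : ℕ} (h : DepthGE A M (n + 1)) {F : A} (hF : F ∈ maximalIdeal A)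
    (hreg : IsSMulRegular M F) : DepthGE A (QuotSMulTop F M) n := by
  have : Nontrivial M := have ⟨_, _, _, hrs⟩ := h; hrs.nontrivial
  have := nontrivial_quotSMulTop_of_mem_maximalIdeal M hF
  rw [depthGE_iff_subsingleton_ext] at h ⊢
  intro i hi
  have hexact := Ext.covariant_sequence_exact₃' (ModuleCat.of A (Shrink.{v} (A ⧸ maximalIdeal A)))
    (IsSMulRegular.smulShortComplex_shortExact (M := ModuleCat.of A M) hreg) i (i + 1) rfl
  have hleft := AddCommGrpCat.isZero_of_iff_subsingleton.mpr (h i (by lia))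
  have hright := AddCommGrpCat.isZero_of_iff_subsingleton.mpr (h (i + 1) (by lia))
  exact AddCommGrpCat.subsingleton_of_isZero <|
    hexact.isZero_of_both_zeros (hleft.eq_zero_of_src _) (hright.eq_zero_of_tgt _)

theorem isWeaklyRegular_of_depthGE {Fs : List A} (hdepth : DepthGE A M Fs.length)
    (hFs : (Module.annihilator A M ⊔ Ideal.ofList Fs).radical = maximalIdeal A) :
    IsWeaklyRegular M Fs := by
  induction Fs generalizing M with
  | nil => exact IsWeaklyRegular.nil A M
  | cons F Fs ih =>
    have hmem : Ideal.ofList (F :: Fs) ≤ maximalIdeal A :=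
      hFs ▸ le_sup_right.trans Ideal.le_radical
    rw [Ideal.ofList_cons, sup_le_iff, Ideal.span_singleton_le_iff_mem] at hmem
    have hF := isSMulRegular_of_depthGE hdepth hFs
    have hdepth' := hdepth.quotSMulTop hmem.1 hF
    refine (isWeaklyRegular_cons_iff M F Fs).mpr ⟨hF, ih hdepth' ?_⟩
    have : Nontrivial (QuotSMulTop F M) := have ⟨_, _, _, hrs⟩ := hdepth'; hrs.nontrivial
    have hann : Module.annihilator A (QuotSMulTop F M) ≤ maximalIdeal A :=
      le_maximalIdeal (Module.annihilator_eq_top_iff.not.mpr (not_subsingleton _))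
    refine radical_eq_maximalIdeal_of_le ?_
      (ne_top_of_le_ne_top Ideal.IsPrime.ne_top' (sup_le hann hmem.2)) hFs
    rw [Ideal.ofList_cons, ← sup_assoc]
    exact sup_le_sup_right (annihilator_sup_span_singleton_le F) _

end LocalAlgebra

section GradedAlgebra

open DirectSum RingTheory.Sequence

section HomogeneousIdeal

variable {A σ : Type*} [CommRing A] [SetLike σ A] [AddSubgroupClass σ A]
  (𝒜 : ℕ → σ) [GradedRing 𝒜] {I : Ideal A}

theorem exists_mem_sub_mul_mem_of_mem_sup_span_singleton (hI : I.IsHomogeneous 𝒜) {F x : A}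
    {e m : ℕ} (hF : F ∈ 𝒜 e) (hx : x ∈ 𝒜 (e + m)) (hxI : x ∈ I ⊔ Ideal.span {F}) :
    ∃ u ∈ 𝒜 m, x - F * u ∈ I := by
  obtain ⟨y, hy, z, hz, rfl⟩ := Submodule.mem_sup.mp hxI
  obtain ⟨u, rfl⟩ := Ideal.mem_span_singleton'.mp hz
  have hcomp : (decompose 𝒜 (y + u * F) (e + m) : A) =
      decompose 𝒜 y (e + m) + F * decompose 𝒜 u m := by
    rw [decompose_add, DirectSum.add_apply, AddMemClass.coe_add, mul_comm u,
      coe_decompose_mul_add_of_left_mem 𝒜 hF]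
  refine ⟨decompose 𝒜 u m, SetLike.coe_mem _, ?_⟩
  rw [← decompose_of_mem_same 𝒜 hx, hcomp, add_sub_cancel_right]
  exact hI (e + m) hy

theorem mem_of_mem_sup_span_singleton_of_lt (hI : I.IsHomogeneous 𝒜) {F x : A}
    {e m : ℕ} (hF : F ∈ 𝒜 e) (hx : x ∈ 𝒜 m) (hme : m < e) (hxI : x ∈ I ⊔ Ideal.span {F}) :
    x ∈ I := by
  obtain ⟨y, hy, z, hz, rfl⟩ := Submodule.mem_sup.mp hxI
  obtain ⟨u, rfl⟩ := Ideal.mem_span_singleton'.mp hz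
  rw [← decompose_of_mem_same 𝒜 hx, decompose_add, DirectSum.add_apply, AddMemClass.coe_add,
    mul_comm u, coe_decompose_mul_of_left_mem_of_not_le 𝒜 hF hme.not_ge, add_zero]
  exact hI m hy

theorem decompose_mul_mem_of_decompose_zero_eq_zero {t y : A} {m : ℕ}
    (ht : (decompose 𝒜 t 0 : A) = 0) (hy : ∀ j < m, (decompose 𝒜 y j : A) ∈ I) :
    (decompose 𝒜 (t * y) m : A) ∈ I := by
  classical
  have hterm (i : ℕ) : (decompose 𝒜 (decompose 𝒜 t i * y) m : A) ∈ I := by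
    rw [coe_decompose_mul_of_left_mem 𝒜 m (SetLike.coe_mem _)]
    split_ifs with him
    · rcases i.eq_zero_or_pos with rfl | hi
      · rw [ht, zero_mul]
        exact I.zero_mem
      · exact I.mul_mem_left _ (hy _ (by omega))
    · exact I.zero_mem
  rw [← sum_support_decompose 𝒜 t, Finset.sum_mul, decompose_sum, DFinsupp.finsetSum_apply,
    AddSubmonoidClass.coe_finsetSum]
  exact I.sum_mem fun i _ => hterm i

theorem mem_of_mul_mem_of_isUnit_decompose_zero (hI : I.IsHomogeneous 𝒜) {s y : A}
    (hs : IsUnit (decompose 𝒜 s 0 : A)) (hsy : s * y ∈ I) : y ∈ I := by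
  refine hI.mem_iff.mpr fun m => ?_
  induction m using Nat.strong_induction_on with | h m ih => ?_
  have htail : (decompose 𝒜 ((s - decompose 𝒜 s 0) * y) m : A) ∈ I :=
    decompose_mul_mem_of_decompose_zero_eq_zero 𝒜
      (by simp [decompose_sub]) ih
  have hhead : (decompose 𝒜 (s * y) m : A) =
      decompose 𝒜 s 0 * decompose 𝒜 y m + decompose 𝒜 ((s - decompose 𝒜 s 0) * y) m := by
    rw [← coe_decompose_mul_of_left_mem_zero 𝒜 (SetLike.coe_mem _), ← AddMemClass.coe_add,
      ← DirectSum.add_apply, ← decompose_add, ← add_mul, add_sub_cancel]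
  exact (I.unit_mul_mem_iff_mem hs).mp ((I.add_mem_iff_left htail).mp (hhead ▸ hI m hsy))

theorem mem_radical_of_isArtinianRing_quotient [IsArtinianRing (A ⧸ I)]
    (hI : I.IsHomogeneous 𝒜) {a : A} {e : ℕ} (ha : a ∈ 𝒜 e) (he : 0 < e) : a ∈ I.radical := by
  obtain ⟨n, b, hb⟩ := IsArtinian.exists_pow_succ_smul_dvd (Ideal.Quotient.mk I a)
    (1 : A ⧸ I)
  obtain ⟨b, rfl⟩ := Ideal.Quotient.mk_surjective b
  have hunit : (decompose 𝒜 (1 - a * b) 0 : A) = 1 := by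
    rw [decompose_sub, DirectSum.sub_apply, AddSubgroupClass.coe_sub,
      decompose_of_mem_same 𝒜 SetLike.GradedOne.one_mem,
      coe_decompose_mul_of_left_mem_of_not_le 𝒜 ha he.not_ge, sub_zero]
  refine ⟨n, mem_of_mul_mem_of_isUnit_decompose_zero 𝒜 hI (hunit ▸ isUnit_one) ?_⟩
  rw [← Ideal.Quotient.eq_zero_iff_mem]
  simp only [smul_eq_mul, mul_one, ← map_pow, ← map_mul, Nat.succ_eq_add_one] at hb
  rw [show (1 - a * b) * a ^ n = a ^ n - a ^ (n + 1) * b by ring, map_sub, hb, sub_self]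

end HomogeneousIdeal

variable {K A : Type*} [Field K] [CommRing A] [Algebra K A]

/-- The degree `m` part of the quotient of a graded algebra by a (homogeneous) ideal `I`. -/
def quotientPiece (𝒜 : ℕ → Submodule K A) (I : Ideal A) (m : ℕ) : Submodule K (A ⧸ I) :=
  (𝒜 m).map (Ideal.Quotient.mkₐ K I).toLinearMap

/-- The Hilbert series of the quotient of a graded algebra by a (homogeneous) ideal `I`. It is
meaningful only when the graded pieces are finite-dimensional. -/
noncomputable def hilbertSeries (𝒜 : ℕ → Submodule K A) (I : Ideal A) : PowerSeries ℤ :=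
  PowerSeries.mk fun m => (Module.finrank K (quotientPiece 𝒜 I m) : ℤ)

theorem finrank_map_add_finrank_inf_ker {V W : Type*} [AddCommGroup V] [Module K V]
    [AddCommGroup W] [Module K W] (φ : V →ₗ[K] W) (U : Submodule K V) [FiniteDimensional K U] :
    Module.finrank K (U.map φ) + Module.finrank K (U ⊓ LinearMap.ker φ : Submodule K V) =
      Module.finrank K U := by
  rw [← LinearMap.finrank_range_add_finrank_ker (φ.domRestrict U), LinearMap.range_domRestrict,
    LinearMap.ker_domRestrict, ← Submodule.map_comap_subtype, Submodule.finrank_map_subtype_eq]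

variable (𝒜 : ℕ → Submodule K A) {I : Ideal A}

theorem map_factor_quotientPiece {J : Ideal A} (hIJ : I ≤ J) (m : ℕ) :
    (quotientPiece 𝒜 I m).map (Ideal.Quotient.factorₐ K hIJ).toLinearMap =
      quotientPiece 𝒜 J m := by
  rw [quotientPiece, ← Submodule.map_comp]
  rfl

instance finiteDimensional_quotientPiece (m : ℕ) [FiniteDimensional K (𝒜 m)] :
    FiniteDimensional K (quotientPiece 𝒜 I m) :=
  Module.Finite.map _ _

variable [GradedAlgebra 𝒜]

theorem quotientPiece_inf_ker_factor (hI : I.IsHomogeneous 𝒜) {F : A} {e : ℕ} (hF : F ∈ 𝒜 e)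
    (m : ℕ) :
    quotientPiece 𝒜 I (e + m) ⊓
        LinearMap.ker (Ideal.Quotient.factorₐ K
          (le_sup_left : I ≤ I ⊔ Ideal.span {F})).toLinearMap =
      (quotientPiece 𝒜 I m).map (Algebra.lsmul K K (A ⧸ I) F) := by
  apply le_antisymm
  · rintro _ ⟨⟨x, hx, rfl⟩, hker⟩
    have hxI : x ∈ I ⊔ Ideal.span {F} := Ideal.Quotient.eq_zero_iff_mem.mp hker
    obtain ⟨u, hu, hxu⟩ := exists_mem_sub_mul_mem_of_mem_sup_span_singleton 𝒜 hI hF hx hxI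
    exact ⟨_, ⟨u, hu, rfl⟩, (Ideal.Quotient.eq.mpr hxu).symm⟩
  · rintro _ ⟨_, ⟨u, hu, rfl⟩, rfl⟩
    refine ⟨⟨F * u, SetLike.mul_mem_graded hF hu, rfl⟩, Ideal.Quotient.eq_zero_iff_mem.mpr ?_⟩
    exact Ideal.mem_sup_right (Ideal.mul_mem_right _ _ (Ideal.mem_span_singleton_self F))

theorem quotientPiece_inf_ker_factor_of_lt (hI : I.IsHomogeneous 𝒜) {F : A} {e m : ℕ}
    (hF : F ∈ 𝒜 e) (hme : m < e) :
    quotientPiece 𝒜 I m ⊓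
        LinearMap.ker (Ideal.Quotient.factorₐ K
          (le_sup_left : I ≤ I ⊔ Ideal.span {F})).toLinearMap =
      ⊥ := by
  refine eq_bot_iff.mpr ?_
  rintro _ ⟨⟨x, hx, rfl⟩, hker⟩
  exact Ideal.Quotient.eq_zero_iff_mem.mpr (mem_of_mem_sup_span_singleton_of_lt 𝒜 hI hF hx hme
    (Ideal.Quotient.eq_zero_iff_mem.mp hker))

theorem hilbertSeries_sup_span_singleton [∀ m, FiniteDimensional K (𝒜 m)]
    (hI : I.IsHomogeneous 𝒜) {F : A} {e : ℕ} (hF : F ∈ 𝒜 e) (hreg : IsSMulRegular (A ⧸ I) F) :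
    hilbertSeries 𝒜 (I ⊔ Ideal.span {F}) = hilbertSeries 𝒜 I * (1 - PowerSeries.X ^ e) := by
  ext m
  have hdim := finrank_map_add_finrank_inf_ker (Ideal.Quotient.factorₐ K
    (le_sup_left : I ≤ I ⊔ Ideal.span {F})).toLinearMap (quotientPiece 𝒜 I m)
  rw [map_factor_quotientPiece] at hdim
  rw [mul_sub, mul_one, map_sub, mul_comm, PowerSeries.coeff_X_pow_mul']
  simp only [hilbertSeries, PowerSeries.coeff_mk]
  split_ifs with hem
  · obtain ⟨j, rfl⟩ := Nat.exists_eq_add_of_le hem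
    rw [quotientPiece_inf_ker_factor 𝒜 hI hF,
      ← (Submodule.equivMapOfInjective (Algebra.lsmul K K (A ⧸ I) F) hreg _).finrank_eq] at hdim
    rw [Nat.add_sub_cancel_left]
    omega
  · rw [quotientPiece_inf_ker_factor_of_lt 𝒜 hI hF (not_le.mp hem), finrank_bot] at hdim
    omega

theorem isHomogeneous_ofList_map {ι : Type*} {F : ι → A} {e : ι → ℕ} (hF : ∀ i, F i ∈ 𝒜 (e i))
    (l : List ι) : (Ideal.ofList (l.map F)).IsHomogeneous 𝒜 := by
  refine Ideal.homogeneous_span 𝒜 _ fun x hx => ?_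
  obtain ⟨i, -, rfl⟩ := List.mem_map.mp hx
  exact ⟨e i, hF i⟩

theorem hilbertSeries_ofList [∀ m, FiniteDimensional K (𝒜 m)] {ι : Type*} {F : ι → A}
    {e : ι → ℕ} (hF : ∀ i, F i ∈ 𝒜 (e i)) {l : List ι} (hl : IsWeaklyRegular A (l.map F)) :
    hilbertSeries 𝒜 (Ideal.ofList (l.map F)) =
      hilbertSeries 𝒜 ⊥ * (l.map fun i => 1 - PowerSeries.X ^ e i).prod := by
  induction l using List.reverseRecOn with
  | nil => simp
  | append_singleton l i ih =>
    rw [List.map_append, isWeaklyRegular_append_iff, List.map_singleton,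
      isWeaklyRegular_singleton_iff] at hl
    have hreg : IsSMulRegular (A ⧸ Ideal.ofList (l.map F)) (F i) := by
      have := hl.2
      rwa [smul_eq_mul, Ideal.mul_top] at this
    rw [List.map_append, Ideal.ofList_append, List.map_singleton, Ideal.ofList_singleton,
      hilbertSeries_sup_span_singleton 𝒜 (isHomogeneous_ofList_map 𝒜 hF l) (hF i) hreg, ih hl.1,
      List.map_append, List.prod_append, List.map_singleton, List.prod_singleton, mul_assoc]

theorem isInternal_quotientPiece (hI : I.IsHomogeneous 𝒜) :
    DirectSum.IsInternal (quotientPiece 𝒜 I) := by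
  refine DirectSum.isInternal_submodule_of_iSupIndep_of_iSup_eq_top (fun m => ?_) ?_
  · refine Submodule.disjoint_def.mpr ?_
    rintro _ ⟨a, ha, rfl⟩ hb
    simp only [quotientPiece, ← Submodule.map_iSup] at hb
    obtain ⟨b, hb, hba⟩ := hb
    have hbm : GradedAlgebra.proj 𝒜 m b = 0 := by
      refine (iSup₂_le fun j hj c hc => ?_ : (⨆ j, ⨆ (_ : j ≠ m), 𝒜 j) ≤
        LinearMap.ker (GradedAlgebra.proj 𝒜 m)) hb
      exact decompose_of_mem_ne 𝒜 hc hj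
    have ham : GradedAlgebra.proj 𝒜 m (b - a) = -a := by
      rw [map_sub, hbm, GradedAlgebra.proj_apply, decompose_of_mem_same 𝒜 ha, zero_sub]
    refine Ideal.Quotient.eq_zero_iff_mem.mpr (neg_mem_iff.mp (ham ▸ hI m ?_))
    exact Ideal.Quotient.eq.mp hba
  · rw [show ⨆ m, quotientPiece 𝒜 I m = _ from (Submodule.map_iSup _ 𝒜).symm,
      (Decomposition.isInternal 𝒜).submodule_iSup_eq_top, Submodule.map_top,
      LinearMap.range_eq_top]
    exact Ideal.Quotient.mk_surjective

theorem exists_polynomial_eq_hilbertSeries (hI : I.IsHomogeneous 𝒜)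
    [FiniteDimensional K (A ⧸ I)] :
    ∃ Q : Polynomial ℤ, (Q : PowerSeries ℤ) = hilbertSeries 𝒜 I ∧
      Q.eval 1 = Module.finrank K (A ⧸ I) := by
  classical
  have hint := isInternal_quotientPiece 𝒜 hI
  have hfinite : Finite {m // quotientPiece 𝒜 I m ≠ ⊥} :=
    WellFoundedGT.finite_ne_bot_of_iSupIndep hint.submodule_iSupIndep
  have := Fintype.ofFinite {m // quotientPiece 𝒜 I m ≠ ⊥}
  refine ⟨∑ m : {m // quotientPiece 𝒜 I m ≠ ⊥},
    Polynomial.monomial m.1 (Module.finrank K (quotientPiece 𝒜 I m) : ℤ), ?_, ?_⟩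
  · ext m
    simp only [Polynomial.coeff_coe, Polynomial.finsetSum_coeff, Polynomial.coeff_monomial,
      hilbertSeries, PowerSeries.coeff_mk]
    by_cases hm : quotientPiece 𝒜 I m = ⊥
    · rw [hm, finrank_bot, Nat.cast_zero]
      exact Finset.sum_eq_zero fun j _ => if_neg fun hj : j.1 = m => j.2 (hj ▸ hm)
    · rw [Fintype.sum_eq_single ⟨m, hm⟩ fun j hj => if_neg fun h => hj (Subtype.ext h), if_pos rfl]
  · have e := LinearEquiv.ofBijective (DirectSum.coeLinearMap _)
      (DirectSum.isInternal_ne_bot_iff.mpr hint)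
    rw [← e.finrank_eq, Module.finrank_directSum, Polynomial.eval_finsetSum]
    simp only [Polynomial.eval_monomial, one_pow, mul_one, Nat.cast_sum]

theorem prod_one_sub_X_pow (l : List ℕ) :
    (l.map fun e => 1 - (Polynomial.X : Polynomial ℤ) ^ e).prod =
      (1 - Polynomial.X) ^ l.length *
        (l.map fun e => ∑ j ∈ Finset.range e, (Polynomial.X : Polynomial ℤ) ^ j).prod := by
  simp only [← mul_neg_geom_sum, List.prod_map_mul, List.map_const', List.prod_replicate]

theorem coe_prod_one_sub_X_pow (l : List ℕ) :
    (((l.map fun e => 1 - Polynomial.X ^ e).prod : Polynomial ℤ) : PowerSeries ℤ) =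
      (l.map fun e => 1 - PowerSeries.X ^ e).prod := by
  induction l with
  | nil => simp
  | cons e l ih => simp [ih]

theorem eval_one_prod_geom_sum (l : List ℕ) :
    (l.map fun e => ∑ j ∈ Finset.range e, (Polynomial.X : Polynomial ℤ) ^ j).prod.eval 1 =
      (l.prod : ℤ) := by
  induction l with
  | nil => simp
  | cons e l ih => simp [Polynomial.eval_finsetSum, ih]

theorem finrank_quotient_ofList_mul_prod_eq [∀ m, FiniteDimensional K (𝒜 m)] {ι κ : Type*}
    {F : ι → A} {G : κ → A} {d : ι → ℕ} {e : κ → ℕ} (hF : ∀ i, F i ∈ 𝒜 (d i))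
    (hG : ∀ i, G i ∈ 𝒜 (e i)) {l : List ι} {l' : List κ} (hlen : l.length = l'.length)
    (hl : IsWeaklyRegular A (l.map F)) (hl' : IsWeaklyRegular A (l'.map G))
    [FiniteDimensional K (A ⧸ Ideal.ofList (l.map F))]
    [FiniteDimensional K (A ⧸ Ideal.ofList (l'.map G))] :
    Module.finrank K (A ⧸ Ideal.ofList (l.map F)) * (l'.map e).prod =
      Module.finrank K (A ⧸ Ideal.ofList (l'.map G)) * (l.map d).prod := by
  obtain ⟨P, hP, hP1⟩ := exists_polynomial_eq_hilbertSeries 𝒜 (isHomogeneous_ofList_map 𝒜 hF l)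
  obtain ⟨Q, hQ, hQ1⟩ := exists_polynomial_eq_hilbertSeries 𝒜 (isHomogeneous_ofList_map 𝒜 hG l')
  rw [hilbertSeries_ofList 𝒜 hF hl] at hP
  rw [hilbertSeries_ofList 𝒜 hG hl'] at hQ
  have hcross : P * ((l'.map e).map fun e => 1 - Polynomial.X ^ e).prod =
      Q * ((l.map d).map fun d => 1 - Polynomial.X ^ d).prod := by
    apply Polynomial.coe_injective
    rw [Polynomial.coe_mul, Polynomial.coe_mul, hP, hQ, coe_prod_one_sub_X_pow,
      coe_prod_one_sub_X_pow, List.map_map, List.map_map, mul_right_comm]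
    rfl
  rw [prod_one_sub_X_pow, prod_one_sub_X_pow, mul_left_comm, mul_left_comm Q, List.length_map,
    List.length_map, hlen] at hcross
  have hne : (1 - Polynomial.X : Polynomial ℤ) ≠ 0 :=
    fun h => by simpa using congrArg (Polynomial.eval 0) h
  have heval := congrArg (Polynomial.eval 1) (mul_left_cancel₀ (pow_ne_zero _ hne) hcross)
  rw [Polynomial.eval_mul, Polynomial.eval_mul, eval_one_prod_geom_sum, eval_one_prod_geom_sum,
    hP1, hQ1] at heval
  exact_mod_cast heval

theorem isWeaklyRegular_of_isLocalization {S : Submonoid A}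
    (hS : ∀ s ∈ S, IsUnit (decompose 𝒜 s 0 : A)) (B : Type*) [CommRing B] [Algebra A B]
    [IsLocalization S B] {ι : Type*} {F : ι → A} {e : ι → ℕ} (hF : ∀ i, F i ∈ 𝒜 (e i)) {l : List ι}
    (hl : IsWeaklyRegular B ((l.map F).map (algebraMap A B))) : IsWeaklyRegular A (l.map F) := by
  rw [isWeaklyRegular_iff] at hl ⊢
  intro i hi
  have hreg := hl i (by simpa using hi)
  rw [isSMulRegular_quotient_iff_mem_of_smul_mem] at hreg ⊢
  intro x hx
  simp only [smul_eq_mul, Ideal.mul_top, List.getElem_map, ← List.map_take,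
    ← Ideal.map_ofList] at hreg hx ⊢
  have hloc := hreg (algebraMap A B x) (by
    rw [← map_mul]
    exact Ideal.mem_map_of_mem _ hx)
  rw [IsLocalization.algebraMap_mem_map_algebraMap_iff S] at hloc
  obtain ⟨s, hs, hsx⟩ := hloc
  exact mem_of_mul_mem_of_isUnit_decompose_zero 𝒜 (isHomogeneous_ofList_map 𝒜 hF _) (hS s hs) hsx

end GradedAlgebra

section WeightedBezout

open RingTheory.Sequence IsLocalRing

attribute [local instance] MvPolynomial.weightedGradedAlgebra

section CommRing

variable {σ R : Type*} [CommRing R]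

theorem isWeaklyRegular_map_X {l : List σ} (hl : l.Nodup) :
    IsWeaklyRegular (MvPolynomial σ R) (l.map (X : σ → MvPolynomial σ R)) := by
  classical
  rw [isWeaklyRegular_iff]
  intro i hi
  rw [isSMulRegular_quotient_iff_mem_of_smul_mem]
  intro p hp
  have hspan : Ideal.ofList ((l.map (X : σ → MvPolynomial σ R)).take i) =
      Ideal.span (X '' {a | a ∈ l.take i}) := by
    rw [← List.map_take]
    exact congrArg Ideal.span (Set.ext fun _ => List.mem_map)
  rw [smul_eq_mul, Ideal.mul_top, hspan, mem_ideal_span_X_image] at hp ⊢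
  rw [List.length_map] at hi
  intro m hm
  obtain ⟨a, ha, hma⟩ := hp (Finsupp.single l[i] 1 + m) (by
    rw [List.getElem_map, smul_eq_mul, mem_support_iff, coeff_X_mul]
    exact mem_support_iff.mp hm)
  have hne : l[i] ≠ a := by
    rintro rfl
    obtain ⟨j, hj, hji⟩ := List.mem_take_iff_getElem.mp ha
    have := hl.getElem_inj_iff.mp hji
    omega
  exact ⟨a, ha, by simpa [Finsupp.single_apply, hne] using hma⟩

theorem idealOfVars_eq_ker_constantCoeff :
    idealOfVars σ R = RingHom.ker (constantCoeff : MvPolynomial σ R →+* R) := by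
  ext p
  rw [idealOfVars, ← Set.image_univ, mem_ideal_span_X_image, RingHom.mem_ker, constantCoeff_eq]
  constructor
  · intro h
    by_contra hc
    obtain ⟨i, -, hi⟩ := h 0 (mem_support_iff.mpr hc)
    exact hi rfl
  · intro h m hm
    have hm0 : m ≠ 0 := by
      rintro rfl
      exact mem_support_iff.mp hm h
    obtain ⟨i, hi⟩ := Finsupp.ne_iff.mp hm0
    exact ⟨i, trivial, hi⟩

theorem mem_idealOfVars_of_isWeightedHomogeneous {M : Type*} [AddCommMonoid M] {w : σ → M}
    {p : MvPolynomial σ R} {e : M} (hp : IsWeightedHomogeneous w p e) (he : e ≠ 0) :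
    p ∈ idealOfVars σ R := by
  rw [idealOfVars_eq_ker_constantCoeff, RingHom.mem_ker, constantCoeff_eq]
  by_contra hc
  exact he ((hp hc).symm.trans (map_zero _))

theorem isWeightedHomogeneous_natCast_iff {w : σ → ℕ} {p : MvPolynomial σ R} {e : ℕ} :
    IsWeightedHomogeneous (fun i => (w i : ℤ)) p (e : ℤ) ↔ IsWeightedHomogeneous w p e := by
  have hcast (m : σ →₀ ℕ) :
      Finsupp.weight (fun i => (w i : ℤ)) m = (Finsupp.weight w m : ℕ) := by
    simp [Finsupp.weight_apply, Finsupp.sum]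
  simp only [IsWeightedHomogeneous, hcast, Nat.cast_inj]

theorem nonneg_of_isWeightedHomogeneous_natCast {w : σ → ℕ} {p : MvPolynomial σ R} {e : ℤ}
    (hp : IsWeightedHomogeneous (fun i => (w i : ℤ)) p e) (hp0 : p ≠ 0) : 0 ≤ e := by
  obtain ⟨m, hm⟩ := ne_zero_iff.mp hp0
  rw [← hp hm, Finsupp.weight_apply, Finsupp.sum]
  positivity

end CommRing

variable {K σ : Type*} [Field K]

instance isMaximal_idealOfVars : (idealOfVars σ K).IsMaximal :=
  idealOfVars_eq_ker_constantCoeff (σ := σ) (R := K) ▸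
    RingHom.ker_isMaximal_of_surjective _ fun c => ⟨C c, constantCoeff_C σ c⟩

theorem finrank_quotient_idealOfVars :
    Module.finrank K (MvPolynomial σ K ⧸ idealOfVars σ K) = 1 := by
  have hker : idealOfVars σ K = RingHom.ker (aeval (R := K) (0 : σ → K)) := by
    rw [idealOfVars_eq_ker_constantCoeff]
    ext p
    simp [RingHom.mem_ker]
  rw [hker, (Ideal.quotientKerAlgEquivOfSurjective (f := aeval (R := K) (0 : σ → K))
    fun c => ⟨C c, by simp⟩).toLinearEquiv.finrank_eq, Module.finrank_self]

variable {w : σ → ℕ}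

theorem finiteDimensional_weightedHomogeneousSubmodule [Finite σ] (hw : ∀ i, 0 < w i) (m : ℕ) :
    FiniteDimensional K (weightedHomogeneousSubmodule K w m) :=
  Module.Finite.iff_fg.mpr (weightedHomogeneousSubmodule_fg K w (fun i => (hw i).ne') m)

theorem radical_eq_idealOfVars (hw : ∀ i, 0 < w i) {I : Ideal (MvPolynomial σ K)}
    (hI : I.IsHomogeneous (weightedHomogeneousSubmodule K w)) (hle : I ≤ idealOfVars σ K)
    [FiniteDimensional K (MvPolynomial σ K ⧸ I)] : I.radical = idealOfVars σ K := by
  have : IsArtinianRing (MvPolynomial σ K ⧸ I) := IsArtinianRing.of_finite K _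
  refine le_antisymm (isMaximal_idealOfVars.isPrime.radical_le_iff.mpr hle) (Ideal.span_le.mpr ?_)
  rintro _ ⟨i, rfl⟩
  exact mem_radical_of_isArtinianRing_quotient _ hI
    (isWeightedHomogeneous_X K w i : X i ∈ weightedHomogeneousSubmodule K w (w i)) (hw i)

theorem isUnit_decompose_zero (hw : ∀ i, 0 < w i) {s : MvPolynomial σ K}
    (hs : s ∉ idealOfVars σ K) :
    IsUnit (DirectSum.decompose (weightedHomogeneousSubmodule K w) s 0 : MvPolynomial σ K) := by
  rw [idealOfVars_eq_ker_constantCoeff, RingHom.mem_ker, constantCoeff_eq] at hs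
  have hcomp : (DirectSum.decompose (weightedHomogeneousSubmodule K w) s 0 : MvPolynomial σ K) =
      C (coeff 0 s) :=
    (weightedDecomposition.decompose'_apply K w s 0).trans
      (weightedHomogeneousComponent_zero s fun i => (hw i).ne')
  exact hcomp ▸ (IsUnit.mk0 _ hs).map C

theorem isWeaklyRegular_of_finite_quotient [Fintype σ] (hw : ∀ i, 0 < w i) {ι : Type*}
    {F : ι → MvPolynomial σ K} {e : ι → ℕ} (hF : ∀ i, IsWeightedHomogeneous w (F i) (e i))
    (he : ∀ i, 0 < e i) {l : List ι} (hl : l.length = Fintype.card σ)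
    [FiniteDimensional K (MvPolynomial σ K ⧸ Ideal.ofList (l.map F))] :
    IsWeaklyRegular (MvPolynomial σ K) (l.map F) := by
  have hle : Ideal.ofList (l.map F) ≤ idealOfVars σ K := by
    refine Ideal.span_le.mpr fun p hp => ?_
    obtain ⟨i, -, rfl⟩ := List.mem_map.mp hp
    exact mem_idealOfVars_of_isWeightedHomogeneous (hF i) (he i).ne'
  have hrad : (Ideal.ofList (l.map F)).radical = idealOfVars σ K :=
    radical_eq_idealOfVars hw (isHomogeneous_ofList_map _ hF l) hle
  let B := Localization.AtPrime (idealOfVars σ K)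
  have hX : IsRegular B (((Finset.univ : Finset σ).toList.map X).map
      (algebraMap (MvPolynomial σ K) B)) := by
    refine (isWeaklyRegular_map_X (Finset.nodup_toList _)).isRegular_of_isLocalization_of_mem
      B (idealOfVars σ K) fun r hr => ?_
    obtain ⟨i, -, rfl⟩ := List.mem_map.mp hr
    exact Ideal.subset_span (Set.mem_range_self i)
  refine isWeaklyRegular_of_isLocalization _ (S := (idealOfVars σ K).primeCompl)
    (fun s hs => isUnit_decompose_zero hw hs) B hF (isWeaklyRegular_of_depthGE ?_ ?_)
  · refine ⟨_, ?_, fun r hr => ?_, hX⟩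
    · simp [hl]
    · obtain ⟨_, hp, rfl⟩ := List.mem_map.mp hr
      obtain ⟨i, -, rfl⟩ := List.mem_map.mp hp
      exact (IsLocalization.AtPrime.to_map_mem_maximal_iff B (idealOfVars σ K) _).mpr
        (Ideal.subset_span (Set.mem_range_self i))
  · have hmin : idealOfVars σ K ∈ (Ideal.ofList (l.map F)).minimalPrimes := by
      rw [← Ideal.radical_minimalPrimes, hrad, Ideal.minimalPrimes_eq_subsingleton_self]
      rfl
    rw [Module.annihilator_eq_bot.mpr inferInstance, bot_sup_eq, ← Ideal.map_ofList,
      IsLocalization.AtPrime.radical_map_of_mem_minimalPrimes B (idealOfVars σ K) _ hmin]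
    exact IsLocalization.AtPrime.map_eq_maximalIdeal (idealOfVars σ K) B

theorem ofList_map_toList_univ {ι R : Type*} [Semiring R] [Fintype ι] (F : ι → R) :
    Ideal.ofList ((Finset.univ : Finset ι).toList.map F) = Ideal.span (Set.range F) := by
  simp [Ideal.ofList, Set.range]

theorem prod_mul_finrank_quotient_eq_prod [Fintype σ] (hw : ∀ i, 0 < w i) {ι : Type*} [Fintype ι]
    {F : ι → MvPolynomial σ K} {e : ι → ℕ} (hF : ∀ i, IsWeightedHomogeneous w (F i) (e i))
    (he : ∀ i, 0 < e i) (hcard : Fintype.card ι = Fintype.card σ)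
    [hfin : FiniteDimensional K (MvPolynomial σ K ⧸ Ideal.span (Set.range F))] :
    (∏ i, w i) * Module.finrank K (MvPolynomial σ K ⧸ Ideal.span (Set.range F)) = ∏ i, e i := by
  have hX := finrank_quotient_idealOfVars (K := K) (σ := σ)
  have hfinX : FiniteDimensional K (MvPolynomial σ K ⧸ idealOfVars σ K) :=
    .of_finrank_pos (hX ▸ one_pos)
  have := finiteDimensional_weightedHomogeneousSubmodule (K := K) hw
  rw [idealOfVars, ← ofList_map_toList_univ] at hX hfinX
  rw [← ofList_map_toList_univ] at hfin ⊢
  have hlen : (Finset.univ : Finset ι).toList.length = Fintype.card σ := by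
    rw [Finset.length_toList, Finset.card_univ, hcard]
  have hcomp := finrank_quotient_ofList_mul_prod_eq (weightedHomogeneousSubmodule K w) hF
    (fun i => isWeightedHomogeneous_X K w i) (hlen.trans (by simp))
    (isWeaklyRegular_of_finite_quotient hw hF he hlen)
    (isWeaklyRegular_map_X (Finset.nodup_toList Finset.univ))
  rwa [hX, one_mul, Finset.prod_map_toList, Finset.prod_map_toList, mul_comm] at hcomp

theorem ne_zero_of_finite_quotient [Fintype σ] (hw : ∀ i, 0 < w i) {ι : Type*} [Fintype ι]
    {F : ι → MvPolynomial σ K} {e : ι → ℕ} (hF : ∀ i, IsWeightedHomogeneous w (F i) (e i))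
    (he : ∀ i, 0 < e i) (hcard : Fintype.card ι = Fintype.card σ)
    [FiniteDimensional K (MvPolynomial σ K ⧸ Ideal.span (Set.range F))] (i : ι) : F i ≠ 0 := by
  classical
  intro hi
  -- `0` is homogeneous of every degree, so Bézout's formula would hold for every `e i`.
  have hF' (j : ι) : IsWeightedHomogeneous w (F j) (Function.update e i (e i + 1) j) := by
    rcases eq_or_ne j i with rfl | hj
    · exact hi ▸ isWeightedHomogeneous_zero K w _
    · rw [Function.update_of_ne hj]
      exact hF j
  have he' (j : ι) : 0 < Function.update e i (e i + 1) j := by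
    rcases eq_or_ne j i with rfl | hj
    · simp
    · rw [Function.update_of_ne hj]
      exact he j
  have hprod := (prod_mul_finrank_quotient_eq_prod hw hF he hcard).symm.trans
    (prod_mul_finrank_quotient_eq_prod hw hF' he' hcard)
  rw [Finset.prod_update_of_mem (Finset.mem_univ i),
    Finset.prod_eq_mul_prod_sdiff_singleton_of_mem (Finset.mem_univ i)] at hprod
  have hpos : 0 < ∏ j ∈ Finset.univ \ {i}, e j := Finset.prod_pos fun j _ => he j
  exact absurd (Nat.eq_of_mul_eq_mul_right hpos hprod) (Nat.lt_succ_self _).ne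

theorem pos_of_isWeightedHomogeneous_of_mem (hw : ∀ i, 0 < w i) {p : MvPolynomial σ K} {e : ℕ}
    (hp : IsWeightedHomogeneous w p e) (hp0 : p ≠ 0) {I : Ideal (MvPolynomial σ K)} (hI : I ≠ ⊤)
    (hpI : p ∈ I) : 0 < e := by
  by_contra! he
  obtain rfl : e = 0 := Nat.le_zero.mp he
  have hpC : p = C (coeff 0 p) :=
    hp.weightedHomogeneousComponent_same.symm.trans
      (weightedHomogeneousComponent_zero p fun i => (hw i).ne')
  have hc : coeff 0 p ≠ 0 := fun hc => hp0 (by rw [hpC, hc, map_zero])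
  exact hI (I.eq_top_of_isUnit_mem (hpC ▸ hpI) ((IsUnit.mk0 _ hc).map C))

theorem exists_degree_eq_zero_of_span_eq_top {ι M : Type*} [AddCommMonoid M] {w : σ → M}
    {F : ι → MvPolynomial σ K} {e : ι → M} (hF : ∀ i, IsWeightedHomogeneous w (F i) (e i))
    (htop : Ideal.span (Set.range F) = ⊤) : ∃ i, e i = 0 := by
  by_contra! he
  refine (isMaximal_idealOfVars (K := K) (σ := σ)).ne_top (top_unique (htop ▸ Ideal.span_le.mpr ?_))
  rintro _ ⟨i, rfl⟩
  exact mem_idealOfVars_of_isWeightedHomogeneous (hF i) (he i)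

theorem prod_mul_finrank_quotient_eq_prod_int [Fintype σ] (hw : ∀ i, 0 < w i) {ι : Type*}
    [Fintype ι] {F : ι → MvPolynomial σ K} {e : ι → ℤ}
    (hF : ∀ i, IsWeightedHomogeneous (fun s => (w s : ℤ)) (F i) (e i))
    (hcard : Fintype.card ι = Fintype.card σ)
    [FiniteDimensional K (MvPolynomial σ K ⧸ Ideal.span (Set.range F))] :
    (∏ i, (w i : ℤ)) * Module.finrank K (MvPolynomial σ K ⧸ Ideal.span (Set.range F)) =
      ∏ i, e i := by
  classical
  by_cases htop : Ideal.span (Set.range F) = ⊤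
  · obtain ⟨i, hi⟩ := exists_degree_eq_zero_of_span_eq_top hF htop
    have := Ideal.Quotient.subsingleton_iff.mpr htop
    rw [Module.finrank_zero_of_subsingleton, Nat.cast_zero, mul_zero,
      Finset.prod_eq_zero (Finset.mem_univ i) hi]
  let e' : ι → ℕ := fun i => if F i = 0 then 1 else (e i).toNat
  have heq (i : ι) (hi : F i ≠ 0) : (e' i : ℤ) = e i := by
    rw [show e' i = (e i).toNat from if_neg hi,
      Int.toNat_of_nonneg (nonneg_of_isWeightedHomogeneous_natCast (hF i) hi)]
  have hF' (i : ι) : IsWeightedHomogeneous w (F i) (e' i) := by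
    by_cases hi : F i = 0
    · exact hi ▸ isWeightedHomogeneous_zero K w _
    · exact isWeightedHomogeneous_natCast_iff.mp (heq i hi ▸ hF i)
  have he' (i : ι) : 0 < e' i := by
    by_cases hi : F i = 0
    · simp [e', hi]
    · exact pos_of_isWeightedHomogeneous_of_mem hw (hF' i) hi htop
        (Ideal.subset_span (Set.mem_range_self i))
  have hne := ne_zero_of_finite_quotient hw hF' he' hcard
  rw [← Finset.prod_congr rfl fun i _ => heq i (hne i)]
  exact_mod_cast prod_mul_finrank_quotient_eq_prod hw hF' he' hcard

end WeightedBezout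

section Interpolation

section Homogeneity

attribute [local instance] MvPolynomial.weightedGradedAlgebra

variable {R σ M : Type*} [CommRing R]

theorem isWeightedHomogeneous_rename [AddCommMonoid M] {σ' : Type*} {g : σ → σ'} {w : σ' → M}
    {p : MvPolynomial σ R} {e : M} (hp : IsWeightedHomogeneous (w ∘ g) p e) :
    IsWeightedHomogeneous w (rename g p) e := by
  intro m hm
  obtain ⟨u, rfl, hu⟩ := coeff_rename_ne_zero _ _ _ hm
  rw [← hp hu]
  exact Finsupp.linearCombination_mapDomain ℕ g u

theorem isWeightedHomogeneous_det [AddCommMonoid M] {w : σ → M} {κ : Type*} [Fintype κ]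
    [DecidableEq κ] {A : Matrix κ κ (MvPolynomial σ R)} {e : κ → M}
    (hA : ∀ a b, IsWeightedHomogeneous w (A a b) (e b)) :
    IsWeightedHomogeneous w A.det (∑ b, e b) := by
  rw [Matrix.det_apply]
  refine (weightedHomogeneousSubmodule R w (∑ b, e b)).sum_mem fun s _ => ?_
  exact (weightedHomogeneousSubmodule R w (∑ b, e b)).smul_of_tower_mem _
    (IsWeightedHomogeneous.prod _ _ _ fun b _ => hA (s b) b)

theorem isWeightedHomogeneous_of_mul_left [IsDomain R] [AddCommGroup M] {w : σ → M}
    {p q : MvPolynomial σ R} {a b : M} (hp0 : p ≠ 0) (hp : IsWeightedHomogeneous w p a)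
    (hpq : IsWeightedHomogeneous w (p * q) (a + b)) : IsWeightedHomogeneous w q b := by
  classical
  have hcomp := DirectSum.coe_decompose_mul_add_of_left_mem (b := q) (j := b)
    (weightedHomogeneousSubmodule R w) hp
  rw [DirectSum.decompose_of_mem_same _ hpq] at hcomp
  rw [mul_left_cancel₀ hp0 hcomp]
  exact (DirectSum.decompose (weightedHomogeneousSubmodule R w) q b).2

end Homogeneity

variable {R τ : Type*} [CommRing R] {k : ℕ}

/-- The matrix `M_i(g)`: the Vandermonde matrix in the variables `z_a` whose column `i` is
replaced by the values of `g` at `z_a`. By Cramer's rule, its determinant divided by the Vandermonde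
determinant is the coefficient of `z ^ i` in the interpolation polynomial of `g` at the `z_a`. -/
noncomputable def interpolationMatrix (g : MvPolynomial (τ ⊕ Unit) R) (i : Fin k) :
    Matrix (Fin k) (Fin k) (MvPolynomial (τ ⊕ Fin k) R) :=
  (Matrix.vandermonde fun a => X (Sum.inr a)).updateCol i fun a => rename (Sum.map id fun _ => a) g

theorem det_vandermonde_X_ne_zero [IsDomain R] :
    (Matrix.vandermonde fun a : Fin k => (X (Sum.inr a) : MvPolynomial (τ ⊕ Fin k) R)).det ≠ 0 :=
  Matrix.det_vandermonde_ne_zero_iff.mpr ((X_injective).comp Sum.inr_injective)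

section Weights

variable {M : Type*} [AddCommGroup M] {w : τ → M} {v : M}

theorem isWeightedHomogeneous_vandermonde_X (a b : Fin k) :
    IsWeightedHomogeneous (Sum.elim w fun _ : Fin k => v)
      (Matrix.vandermonde (fun a => (X (Sum.inr a) : MvPolynomial (τ ⊕ Fin k) R)) a b)
      ((b : ℕ) • v) :=
  (isWeightedHomogeneous_X R (Sum.elim w fun _ : Fin k => v) (Sum.inr a)).pow b

theorem isWeightedHomogeneous_interpolationMatrix {g : MvPolynomial (τ ⊕ Unit) R} {e : M}
    (hg : IsWeightedHomogeneous (Sum.elim w fun _ => v) g e) (i a b : Fin k) :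
    IsWeightedHomogeneous (Sum.elim w fun _ : Fin k => v) (interpolationMatrix g i a b)
      (Function.update (fun b : Fin k => (b : ℕ) • v) i e b) := by
  rcases eq_or_ne b i with rfl | hb
  · rw [interpolationMatrix, Matrix.updateCol_self, Function.update_self]
    refine isWeightedHomogeneous_rename ?_
    convert hg using 1
    exact funext (Sum.rec (fun _ => rfl) fun _ => rfl)
  · rw [interpolationMatrix, Matrix.updateCol_ne hb, Function.update_of_ne hb]
    exact isWeightedHomogeneous_vandermonde_X a b

theorem isWeightedHomogeneous_of_det_interpolationMatrix [IsDomain R]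
    {g : MvPolynomial (τ ⊕ Unit) R} {e : M}
    (hg : IsWeightedHomogeneous (Sum.elim w fun _ => v) g e) {i : Fin k}
    {V : MvPolynomial (τ ⊕ Fin k) R}
    (hV : (interpolationMatrix g i).det = V * (Matrix.vandermonde fun a => X (Sum.inr a)).det) :
    IsWeightedHomogeneous (Sum.elim w fun _ : Fin k => v) V (e - (i : ℕ) • v) := by
  have hdet := isWeightedHomogeneous_det (isWeightedHomogeneous_interpolationMatrix hg i)
  refine isWeightedHomogeneous_of_mul_left det_vandermonde_X_ne_zero
    (isWeightedHomogeneous_det isWeightedHomogeneous_vandermonde_X) ?_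
  rw [mul_comm, ← hV]
  convert hdet using 1
  rw [Finset.sum_update_of_mem (Finset.mem_univ i),
    Finset.sum_eq_add_sum_sdiff_singleton_of_mem (Finset.mem_univ i)]
  abel

end Weights

end Interpolation

section BlockCollapse

variable {k ℓ : ℕ} {β : Fin k → Fin ℓ}

/-- The indices `a` such that `a` and `a + 1` lie in the same fiber of `β`, i.e. for which
`z_a - z_{a+1}` is a generator of `J_Δ(f, P)`. -/
def SameBlockAsSucc (β : Fin k → Fin ℓ) (a : Fin k) : Prop :=
  ∃ h : (a : ℕ) + 1 < k, β a = β ⟨a + 1, h⟩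

theorem bijective_restrict_not_sameBlockAsSucc (hmono : Monotone β)
    (hsurj : Function.Surjective β) :
    Function.Bijective fun a : {a // ¬ SameBlockAsSucc β a} => β a := by
  have hlast {a b : Fin k} (ha : ¬ SameBlockAsSucc β a) (hab : β a = β b) : b ≤ a := by
    by_contra! hlt
    have hk : (a : ℕ) + 1 < k := (Nat.succ_le_of_lt hlt).trans_lt b.2
    exact ha ⟨hk, le_antisymm (hmono (Fin.le_def.mpr (Nat.le_succ _)))
      (hab ▸ hmono (Fin.le_def.mpr hlt))⟩
  refine ⟨fun a b hab => Subtype.ext (le_antisymm (hlast b.2 hab.symm) (hlast a.2 hab)),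
    fun m => ?_⟩
  obtain ⟨a₀, ha₀⟩ := hsurj m
  obtain ⟨a, ha, hmax⟩ := (Finset.univ.filter (β · = m)).exists_max_image id
    ⟨a₀, Finset.mem_filter.mpr ⟨Finset.mem_univ _, ha₀⟩⟩
  have ham : β a = m := (Finset.mem_filter.mp ha).2
  refine ⟨⟨a, fun ⟨h, hsucc⟩ => ?_⟩, ham⟩
  exact Nat.not_succ_le_self (a : ℕ) (Fin.le_def.mp
    (hmax ⟨a + 1, h⟩ (Finset.mem_filter.mpr ⟨Finset.mem_univ _, hsucc ▸ ham⟩)))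

theorem card_sameBlockAsSucc_add [Fintype {a // SameBlockAsSucc β a}] (hmono : Monotone β)
    (hsurj : Function.Surjective β) : Fintype.card {a // SameBlockAsSucc β a} + ℓ = k := by
  classical
  have hcompl := Fintype.card_of_bijective (bijective_restrict_not_sameBlockAsSucc hmono hsurj)
  have hsum := Fintype.card_congr (Equiv.sumCompl (SameBlockAsSucc β))
  rw [Fintype.card_sum, hcompl, Fintype.card_fin, Fintype.card_fin] at hsum
  exact hsum

end BlockCollapse

section MultiplePoints

variable {R τ ι : Type*} [CommRing R] {k ℓ : ℕ}

/-- The ideal `J_Δ(f, P)`, where `V j i` stands for `V_i^k(f_j)` and the blocks of `P` are the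
fibers of `β`. -/
noncomputable def multiplePointIdeal (V : ι → Fin k → MvPolynomial (τ ⊕ Fin k) R)
    (β : Fin k → Fin ℓ) : Ideal (MvPolynomial (τ ⊕ Fin k) R) :=
  Ideal.span
    ({P | ∃ (j : ι) (i : Fin k), (i : ℕ) ≠ 0 ∧ P = V j i} ∪
     {P | ∃ (a : ℕ) (h : a + 1 < k), β ⟨a, Nat.lt_of_succ_lt h⟩ = β ⟨a + 1, h⟩ ∧
        P = X (Sum.inr ⟨a, Nat.lt_of_succ_lt h⟩) - X (Sum.inr ⟨a + 1, h⟩)})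

/-- The generators of `multiplePointIdeal V β` as an indexed family, so that they can be counted. -/
noncomputable def multiplePointEquation (V : ι → Fin k → MvPolynomial (τ ⊕ Fin k) R)
    (β : Fin k → Fin ℓ) :
    (ι × {i : Fin k // (i : ℕ) ≠ 0}) ⊕ {a // SameBlockAsSucc β a} → MvPolynomial (τ ⊕ Fin k) R :=
  Sum.elim (fun x => V x.1 x.2) fun a =>
    X (Sum.inr a.1) - X (Sum.inr (⟨a.1 + 1, a.2.fst⟩ : Fin k))

theorem span_range_multiplePointEquation (V : ι → Fin k → MvPolynomial (τ ⊕ Fin k) R)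
    (β : Fin k → Fin ℓ) :
    Ideal.span (Set.range (multiplePointEquation V β)) = multiplePointIdeal V β := by
  refine congrArg Ideal.span (Set.Subset.antisymm ?_ ?_)
  · rintro _ ⟨⟨j, i, hi⟩ | ⟨a, h, hab⟩, rfl⟩
    · exact Or.inl ⟨j, i, hi, rfl⟩
    · exact Or.inr ⟨a, h, hab, rfl⟩
  · rintro _ (⟨j, i, hi, rfl⟩ | ⟨a, h, hab, rfl⟩)
    · exact ⟨Sum.inl (j, ⟨i, hi⟩), rfl⟩
    · exact ⟨Sum.inr ⟨⟨a, Nat.lt_of_succ_lt h⟩, h, hab⟩, rfl⟩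

theorem isWeightedHomogeneous_multiplePointEquation {M : Type*} [AddCommGroup M] {w : τ → M}
    {v : M} {V : ι → Fin k → MvPolynomial (τ ⊕ Fin k) R} {e : ι → Fin k → M}
    (hV : ∀ j i, IsWeightedHomogeneous (Sum.elim w fun _ => v) (V j i) (e j i))
    (β : Fin k → Fin ℓ) (y : (ι × {i : Fin k // (i : ℕ) ≠ 0}) ⊕ {a // SameBlockAsSucc β a}) :
    IsWeightedHomogeneous (Sum.elim w fun _ => v) (multiplePointEquation V β y)
      (Sum.elim (fun x => e x.1 x.2) (fun _ => v) y) := by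
  rcases y with x | a
  · exact hV x.1 x.2
  · exact (isWeightedHomogeneous_X R (Sum.elim w fun _ => v) (Sum.inr a.1)).sub
      (isWeightedHomogeneous_X R (Sum.elim w fun _ => v) (Sum.inr _))

theorem map_valEmbedding_filter_ne_zero (k : ℕ) :
    (Finset.univ.filter fun i : Fin k => (i : ℕ) ≠ 0).map Fin.valEmbedding =
      Finset.Icc 1 (k - 1) := by
  ext i
  simp only [Finset.mem_map, Finset.mem_filter, Finset.mem_univ, true_and, Finset.mem_Icc,
    Fin.valEmbedding_apply]
  constructor
  · rintro ⟨a, ha, rfl⟩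
    omega
  · rintro ⟨h1, h2⟩
    exact ⟨⟨i, by omega⟩, Nat.one_le_iff_ne_zero.mp h1, rfl⟩

theorem prod_subtype_ne_zero {N : Type*} [CommMonoid N] (k : ℕ) (g : ℕ → N) :
    ∏ i : {i : Fin k // (i : ℕ) ≠ 0}, g i = ∏ i ∈ Finset.Icc 1 (k - 1), g i := by
  rw [← map_valEmbedding_filter_ne_zero, Finset.prod_map]
  exact (Finset.prod_subtype _ (by simp) fun i : Fin k => g i).symm

theorem card_subtype_ne_zero (k : ℕ) : Fintype.card {i : Fin k // (i : ℕ) ≠ 0} = k - 1 := by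
  rw [Fintype.card_subtype, ← Finset.card_map Fin.valEmbedding, map_valEmbedding_filter_ne_zero,
    Nat.card_Icc, Nat.add_sub_cancel]

end MultiplePoints

theorem stmt1_general {K τ ι : Type*} [Field K] [Fintype τ] [Fintype ι] {k ℓ : ℕ}
    {f : ι → MvPolynomial (τ ⊕ Unit) K} {d : ι → ℕ} {w : τ → ℕ} {wn : ℕ}
    (hw : ∀ m, 0 < w m) (hwn : 0 < wn)
    (hf : ∀ j, (f j).IsWeightedHomogeneous (Sum.elim w fun _ => wn) (d j))
    (hcount : Fintype.card ι * (k - 1) = Fintype.card τ + ℓ)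
    {β : Fin k → Fin ℓ} (hβmono : Monotone β) (hβsurj : Function.Surjective β)
    {V : ι → Fin k → MvPolynomial (τ ⊕ Fin k) K}
    (hV : ∀ j i, (interpolationMatrix (f j) i).det =
      V j i * (Matrix.vandermonde fun a => X (Sum.inr a)).det)
    (hfin : FiniteDimensional K (MvPolynomial (τ ⊕ Fin k) K ⧸ multiplePointIdeal V β)) :
    ((∏ m, w m : ℕ) : ℤ) * (wn : ℤ) ^ ℓ *
        (Module.finrank K (MvPolynomial (τ ⊕ Fin k) K ⧸ multiplePointIdeal V β) : ℤ) =
      ∏ j, ∏ i ∈ Finset.Icc 1 (k - 1), ((d j : ℤ) - (i : ℤ) * (wn : ℤ)) := by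
  classical
  set c := Fintype.card {a // SameBlockAsSucc β a} with hc
  have hcℓ : c + ℓ = k := card_sameBlockAsSucc_add hβmono hβsurj
  have hcard : Fintype.card ((ι × {i : Fin k // (i : ℕ) ≠ 0}) ⊕ {a // SameBlockAsSucc β a}) =
      Fintype.card (τ ⊕ Fin k) := by
    rw [Fintype.card_sum, Fintype.card_prod, card_subtype_ne_zero, hcount, Fintype.card_sum,
      Fintype.card_fin, ← hc, add_assoc, add_comm ℓ, hcℓ]
  have hcast {α : Type} : (fun s => ((Sum.elim w (fun _ : α => wn) s : ℕ) : ℤ)) =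
      Sum.elim (fun m => (w m : ℤ)) fun _ => (wn : ℤ) := Sum.comp_elim _ _ _
  have hVdeg (j : ι) (i : Fin k) : IsWeightedHomogeneous
      (Sum.elim (fun m => (w m : ℤ)) fun _ => (wn : ℤ)) (V j i) (d j - (i : ℕ) * wn) := by
    rw [← nsmul_eq_mul]
    exact isWeightedHomogeneous_of_det_interpolationMatrix
      (hcast ▸ isWeightedHomogeneous_natCast_iff.mpr (hf j)) (hV j i)
  rw [← span_range_multiplePointEquation] at hfin ⊢
  have hbezout := prod_mul_finrank_quotient_eq_prod_int
    (Sum.rec hw fun _ => hwn : ∀ s, 0 < Sum.elim w (fun _ : Fin k => wn) s)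
    (hcast ▸ isWeightedHomogeneous_multiplePointEquation hVdeg β) hcard
  simp only [Fintype.prod_sum_type, Fintype.prod_prod_type, Sum.elim_inl, Sum.elim_inr,
    Finset.prod_const, Finset.card_univ, Fintype.card_fin, ← hc] at hbezout
  refine mul_right_cancel₀ (pow_ne_zero c (Nat.cast_ne_zero.mpr hwn.ne' : (wn : ℤ) ≠ 0)) ?_
  simp only [← prod_subtype_ne_zero k (fun i => (d _ : ℤ) - (i : ℤ) * (wn : ℤ)), ← hbezout]
  have hpow : (wn : ℤ) ^ k = wn ^ c * wn ^ ℓ := by rw [← pow_add, hcℓ]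
  rw [hpow]
  push_cast
  ring

theorem Mmat_eq_interpolationMatrix {n k : ℕ} (g : MvPolynomial (Fin (n - 1) ⊕ Unit) ℂ)
    (i : Fin k) : Mmat g i = interpolationMatrix g i := by
  ext1 a b
  rw [interpolationMatrix, Matrix.updateCol_apply]
  rfl

theorem Vdm_eq_det_vandermonde (n k : ℕ) :
    Vdm n k = (Matrix.vandermonde fun a : Fin k => X (Sum.inr a)).det := by
  rw [Matrix.det_vandermonde, Vdm, Finset.prod_filter, Fintype.prod_prod_type]
  exact Finset.prod_congr rfl fun a _ => by rw [← Finset.prod_filter, Finset.filter_lt_eq_Ioi]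

theorem mul_pred_eq_pred_add {n p q k ℓ : ℕ} (hn : 0 < n) (hnp : n < p) (hq : q = p - n + 1)
    (hkl : (p : ℤ) - (k : ℤ) * ((p : ℤ) - (n : ℤ) + 1) + (ℓ : ℤ) = 0) :
    q * (k - 1) = n - 1 + ℓ := by
  have hq' : (q : ℤ) = p - n + 1 := by omega
  rw [← hq'] at hkl
  cases k with
  | zero =>
    simp only [Nat.cast_zero, zero_mul] at hkl
    omega
  | succ k =>
    have hqk : ((q * k : ℕ) : ℤ) = n - 1 + ℓ := by
      push_cast at hkl ⊢
      linarith
    rw [Nat.add_sub_cancel]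
    omega

/-- the weighted Bezout formula
`w₁⋯w_{n−1}·wₙ^ℓ · dim_ℂ ℂ[x,z₁,…,z_k]/J_Δ(f,P) = ∏_{j=1}^{q} ∏_{i=1}^{k−1} (d_j − i·wₙ)`
for the ideal `J_Δ(f,P)` generated by the `Vᵢᵏ(f_j)` (`1 ≤ i ≤ k−1`, `1 ≤ j ≤ q`)
together with the differences `z_a − z_{a+1}` over indices `a` with `a, a+1` in the
same block of the partition `P = (r₁,…,r_ℓ)` of `k` (blocks encoded as the fibers of
the monotone block-collapse map `β : Fin k → Fin ℓ` with fiber sizes `r`). -/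
theorem stmt1 (n p : ℕ) (hn : 0 < n) (hnp : n < p)
    (q : ℕ) (hq : q = p - n + 1)
    (f : Fin q → MvPolynomial (Fin (n - 1) ⊕ Unit) ℂ)
    (d : Fin q → ℕ) (w : Fin (n - 1) → ℕ) (wn : ℕ)
    (hw : ∀ m, 0 < w m) (hwn : 0 < wn)
    (hf : ∀ j, (f j).IsWeightedHomogeneous (Sum.elim w fun _ => wn) (d j))
    (k ℓ : ℕ) (r : Fin ℓ → ℕ)
    (hr1 : ∀ m, 1 ≤ r m) (hrmono : Antitone r) (hrsum : ∑ m, r m = k)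
    (hkl : (p : ℤ) - (k : ℤ) * ((p : ℤ) - (n : ℤ) + 1) + (ℓ : ℤ) = 0)
    (β : Fin k → Fin ℓ) (hβmono : Monotone β)
    (hβcard : ∀ m, (Finset.univ.filter fun a => β a = m).card = r m)
    (V : Fin q → Fin k → MvPolynomial (Fin (n - 1) ⊕ Fin k) ℂ)
    (hV : ∀ j i, (Mmat (f j) i).det = V j i * Vdm n k)
    (J : Ideal (MvPolynomial (Fin (n - 1) ⊕ Fin k) ℂ))
    (hJ : J = Ideal.span
      ({P | ∃ (j : Fin q) (i : Fin k), (i : ℕ) ≠ 0 ∧ P = V j i} ∪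
       {P | ∃ (a : ℕ) (h : a + 1 < k),
          β ⟨a, Nat.lt_of_succ_lt h⟩ = β ⟨a + 1, h⟩ ∧
          P = (X (Sum.inr ⟨a, Nat.lt_of_succ_lt h⟩) :
                MvPolynomial (Fin (n - 1) ⊕ Fin k) ℂ) - X (Sum.inr ⟨a + 1, h⟩)}))
    (hfin : FiniteDimensional ℂ (MvPolynomial (Fin (n - 1) ⊕ Fin k) ℂ ⧸ J)) :
    ((∏ m, w m : ℕ) : ℤ) * (wn : ℤ) ^ ℓ *
        (Module.finrank ℂ (MvPolynomial (Fin (n - 1) ⊕ Fin k) ℂ ⧸ J) : ℤ) =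
      ∏ j, ∏ i ∈ Finset.Icc 1 (k - 1), ((d j : ℤ) - (i : ℤ) * (wn : ℤ)) := by
  have hcount : Fintype.card (Fin q) * (k - 1) = Fintype.card (Fin (n - 1)) + ℓ := by
    rw [Fintype.card_fin, Fintype.card_fin]
    exact mul_pred_eq_pred_add hn hnp hq hkl
  have hβsurj : Function.Surjective β := fun m => by
    obtain ⟨a, ha⟩ := Finset.card_pos.mp ((hr1 m).trans_eq (hβcard m).symm)
    exact ⟨a, (Finset.mem_filter.mp ha).2⟩
  have hV' (j : Fin q) (i : Fin k) : (interpolationMatrix (f j) i).det =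
      V j i * (Matrix.vandermonde fun a => X (Sum.inr a)).det := by
    rw [← Mmat_eq_interpolationMatrix, ← Vdm_eq_det_vandermonde, hV]
  subst hJ
  exact stmt1_general hw hwn hf hcount hβmono hβsurj hV' hfin
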